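/- arXiv:1905.10818 — 4 statements merged into one kernel-verified Lean document; each statement's English description precedes it below -/
import Mathlib

section
/- In a queue trace q : ℕ → List α, if an element occupies index i in q n, and for times n ≤ n' the number of dequeue steps occurring at times in the interval [n, n') equals d with d ≤ i, then that same element occupies index i − d in q n'. -/
/-- A queue trace: at each time step, exactly one of enqueue (at the tail),
dequeue (from the head), or idle happens. -/
def IsQueueTrace {α : Type*} (q : ℕ → List α) : Prop :=
  ∀ n, (∃ x, q (n + 1) = q n ++ [x]) ∨
    (q n ≠ [] ∧ q (n + 1) = (q n).tail) ∨
    q (n + 1) = q n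

/-- A dequeue step occurs at time `n`. -/
def DequeueAt {α : Type*} (q : ℕ → List α) (n : ℕ) : Prop :=
  q n ≠ [] ∧ q (n + 1) = (q n).tail

open Classical in
theorem queue_index_shift_aux {α : Type*} (q : ℕ → List α) (hq : IsQueueTrace q)
    (n n' i : ℕ) (hnn' : n ≤ n') (hi : i < (q n).length)
    (hdi : ((Finset.Ico n n').filter (DequeueAt q)).card ≤ i) :
    (q n')[i - ((Finset.Ico n n').filter (DequeueAt q)).card]? = (q n)[i]? := by
  induction n', hnn' using Nat.le_induction with
  | base => simp
  | succ k hk ih =>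
    rw [← Finset.insert_Ico_right_eq_Ico_add_one hk, Finset.filter_insert] at hdi ⊢
    by_cases h : DequeueAt q k
    · rw [if_pos h, Finset.card_insert_of_notMem (by simp)] at hdi ⊢
      rw [← ih (by omega), h.2, List.getElem?_tail]
      congr 1
      omega
    · rw [if_neg h] at hdi ⊢
      have ih' := ih hdi
      rcases hq k with ⟨x, hx⟩ | h' | h'
      · have hlt : i - ((Finset.Ico n k).filter (DequeueAt q)).card < (q k).length := by
          by_contra hc
          rw [List.getElem?_eq_none (by omega), List.getElem?_eq_getElem hi] at ih'
          cases ih'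
        rw [hx, List.getElem?_append_left hlt, ih']
      · exact absurd h' h
      · rw [h']
        exact ih hdi

/-- If an element occupies index `i` at time `n`, and `d ≤ i` dequeue steps occur
at times in `[n, n')`, then the same element occupies index `i - d` at time `n'`. -/
theorem queue_index_shift {α : Type*} (q : ℕ → List α) (hq : IsQueueTrace q)
    (n n' i d : ℕ) (hnn' : n ≤ n') (hi : i < (q n).length)
    (hd : Nat.card {m : ℕ | m ∈ Set.Ico n n' ∧ DequeueAt q m} = d)
    (hdi : d ≤ i) :
    (q n')[i - d]? = (q n)[i]? := by
  classical
  have hc : Nat.card {m : ℕ | m ∈ Set.Ico n n' ∧ DequeueAt q m} =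
      ((Finset.Ico n n').filter (DequeueAt q)).card := by
    rw [Nat.card_coe_set_eq, ← Set.ncard_coe_finset]
    congr 1
    ext m
    simp
  rw [hc] at hd
  subst hd
  exact queue_index_shift_aux q hq n n' i hnn' hi hdi
end

section
/- In a queue trace q : ℕ → List α in which dequeue steps occur infinitely often (for every time n there exists m ≥ n at which a dequeue step occurs), every element that is ever in the queue eventually reaches the head: for every time n and every index i < (q n).length, there exists a time m ≥ n such that q m is nonempty, the head of q m is the element that occupied index i of q n, and a dequeue step occurs at time m. -/
/-- If dequeue steps occur infinitely often, then every element that is ever in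
the queue eventually reaches the head and is dequeued. -/
theorem queue_eventually_head {α : Type*} (q : ℕ → List α) (hq : IsQueueTrace q)
    (hinf : ∀ n, ∃ m, n ≤ m ∧ DequeueAt q m)
    (n i : ℕ) (hi : i < (q n).length) :
    ∃ m, n ≤ m ∧ (q m) ≠ [] ∧ (q m).head? = (q n)[i]? ∧ DequeueAt q m := by
  induction i generalizing n with
  | zero =>
    obtain ⟨m, hm, hd⟩ := hinf n
    obtain ⟨d, rfl⟩ := Nat.exists_eq_add_of_le hm
    clear hm
    induction d generalizing n with
    | zero => exact ⟨n, le_rfl, hd.1, by rw [List.head?_eq_getElem?], hd⟩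
    | succ d ih =>
      by_cases hn : DequeueAt q n
      · exact ⟨n, le_rfl, hn.1, by rw [List.head?_eq_getElem?], hn⟩
      · have key : 0 < (q (n + 1)).length ∧ (q (n + 1))[0]? = (q n)[0]? := by
          rcases hq n with ⟨x, hx⟩ | h | h
          · rw [hx]
            exact ⟨by simp, List.getElem?_append_left hi⟩
          · exact absurd h hn
          · rw [h]
            exact ⟨hi, rfl⟩
        obtain ⟨m, h1, h2, h3, h4⟩ := ih (n + 1) key.1 (by
          rwa [show n + 1 + d = n + (d + 1) by omega])
        exact ⟨m, by omega, h2, h3.trans key.2, h4⟩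
  | succ i IH =>
    obtain ⟨m, hm, hd⟩ := hinf n
    obtain ⟨d, rfl⟩ := Nat.exists_eq_add_of_le hm
    clear hm
    induction d generalizing n with
    | zero =>
      obtain ⟨m, h1, h2, h3, h4⟩ := IH (n + 1) (by
        have := hd.2
        simp only [Nat.add_zero] at this
        rw [this, List.length_tail]
        omega)
      refine ⟨m, by omega, h2, ?_, h4⟩
      have := hd.2
      simp only [Nat.add_zero] at this
      rw [h3, this, List.getElem?_tail]
    | succ d ih =>
      by_cases hn : DequeueAt q n
      · obtain ⟨m, h1, h2, h3, h4⟩ := IH (n + 1) (by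
          rw [hn.2, List.length_tail]
          omega)
        refine ⟨m, by omega, h2, ?_, h4⟩
        rw [h3, hn.2, List.getElem?_tail]
      · have key : i + 1 < (q (n + 1)).length ∧ (q (n + 1))[i + 1]? = (q n)[i + 1]? := by
          rcases hq n with ⟨x, hx⟩ | h | h
          · rw [hx]
            exact ⟨by simp only [List.length_append]; omega, List.getElem?_append_left hi⟩
          · exact absurd h hn
          · rw [h]
            exact ⟨hi, rfl⟩
        obtain ⟨m, h1, h2, h3, h4⟩ := ih (n + 1) key.1 (by
          rwa [show n + 1 + d = n + (d + 1) by omega])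
        exact ⟨m, by omega, h2, h3.trans key.2, h4⟩
end

section
/- In a queue trace q : ℕ → List α starting from the empty queue (q 0 = []) in which all enqueued elements are pairwise distinct (no element is enqueued at two different times, and for two enqueue steps at distinct times the enqueued elements differ), if x is enqueued at time n₁, y is enqueued at time n₂ with n₁ < n₂, and y is dequeued at some time m₂ > n₂, then x is dequeued at some time m₁ with n₁ < m₁ < m₂. (This is the trace-level statement of the paper's FIFO guarantee for the GCR queue: threads are dequeued in exactly the order in which they were enqueued.) -/
/-- The element `x` is enqueued at time `n`. -/
def EnqueueAt {α : Type*} (q : ℕ → List α) (n : ℕ) (x : α) : Prop :=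
  q (n + 1) = q n ++ [x]

theorem mem_was_enqueued {α : Type*} (q : ℕ → List α)
    (hq : IsQueueTrace q) (h0 : q 0 = []) (y : α) :
    ∀ n, y ∈ q n → ∃ k, k < n ∧ EnqueueAt q k y := by
  intro n
  induction n with
  | zero => intro h; simp [h0] at h
  | succ n ih =>
    intro h
    have lift : y ∈ q n → ∃ k, k < n + 1 ∧ EnqueueAt q k y := fun h' => by
      obtain ⟨k, hk, hk'⟩ := ih h'
      exact ⟨k, by omega, hk'⟩
    rcases hq n with ⟨z, hz⟩ | ⟨_, hz⟩ | hz
    · rw [hz, List.mem_append, List.mem_singleton] at h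
      rcases h with h | h
      · exact lift h
      · subst h
        exact ⟨n, by omega, hz⟩
    · rw [hz] at h
      exact lift (List.mem_of_mem_tail h)
    · rw [hz] at h
      exact lift h

/-- FIFO dequeue order: in a trace from the empty queue with pairwise distinct
enqueued elements, if `x` is enqueued before `y` and `y` is dequeued, then `x`
is dequeued at some earlier time (after being enqueued). -/
theorem queue_fifo_enqueue_dequeue {α : Type*} (q : ℕ → List α)
    (hq : IsQueueTrace q) (h0 : q 0 = [])
    (hdist : ∀ n₁ n₂ x y, EnqueueAt q n₁ x → EnqueueAt q n₂ y → n₁ ≠ n₂ → x ≠ y)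
    (x y : α) (n₁ n₂ m₂ : ℕ) (hx : EnqueueAt q n₁ x) (hy : EnqueueAt q n₂ y)
    (h12 : n₁ < n₂) (hm₂ : n₂ < m₂) (hdeq : DequeueAt q m₂)
    (hheady : (q m₂).head? = some y) :
    ∃ m₁, n₁ < m₁ ∧ m₁ < m₂ ∧ DequeueAt q m₁ ∧ (q m₁).head? = some x := by
  by_contra hno
  have key : ∀ d, n₁ + 1 + d ≤ m₂ → ∃ a b, q (n₁ + 1 + d) = a ++ x :: b ∧ y ∉ a := by
    intro d
    induction d with
    | zero =>
      intro _
      refine ⟨q n₁, [], hx, fun hmem => ?_⟩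
      obtain ⟨k, hk, hk'⟩ := mem_was_enqueued q hq h0 y n₁ hmem
      exact hdist k n₂ y y hk' hy (by omega) rfl
    | succ d ih =>
      intro hd
      obtain ⟨a, b, hab, hya⟩ := ih (by omega)
      rcases hq (n₁ + 1 + d) with ⟨z, hz⟩ | ⟨hne, hz⟩ | hz
      · exact ⟨a, b ++ [z], by rw [← add_assoc, hz, hab]; simp, hya⟩
      · cases a with
        | nil =>
          exact absurd ⟨n₁ + 1 + d, by omega, by omega, ⟨hne, hz⟩, by simp [hab]⟩ hno
        | cons c a =>
          refine ⟨a, b, by rw [← add_assoc, hz, hab]; simp, fun h => hya ?_⟩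
          exact List.mem_cons_of_mem _ h
      · exact ⟨a, b, by rw [← add_assoc, hz, hab], hya⟩
  obtain ⟨a, b, hab, hya⟩ := key (m₂ - (n₁ + 1)) (by omega)
  rw [show n₁ + 1 + (m₂ - (n₁ + 1)) = m₂ by omega] at hab
  rw [hab] at hheady
  cases a with
  | nil =>
    simp at hheady
    exact hdist n₁ n₂ x y hx hy (by omega) hheady
  | cons c a =>
    simp at hheady
    simp [hheady] at hya
end

section
/- In a queue trace q : ℕ → List α starting from the empty queue, in which dequeue steps occur infinitely often and all enqueued elements are pairwise distinct, every element that is enqueued is eventually dequeued; that is, if x is enqueued at time n, then there exists a time m > n such that q m ≠ [], (q m).head = x, and a dequeue step occurs at time m. -/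
theorem queue_aux {α : Type*} (q : ℕ → List α) (hq : IsQueueTrace q)
    (hinf : ∀ n, ∃ m, n ≤ m ∧ DequeueAt q m) (x : α) (pre : List α) :
    ∀ (t : ℕ) (post : List α), q t = pre ++ x :: post →
      ∃ m, t ≤ m ∧ (q m).head? = some x ∧ DequeueAt q m := by
  induction pre with
  | nil =>
    intro t post h
    obtain ⟨m, hm, hd⟩ := hinf t
    obtain ⟨d, rfl⟩ := Nat.exists_eq_add_of_le hm
    clear hm
    induction d generalizing t post with
    | zero => exact ⟨t, le_refl t, by simp [h], hd⟩
    | succ d ih =>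
      have hd' : DequeueAt q (t + 1 + d) := by
        rwa [show t + 1 + d = t + (d + 1) by omega]
      rcases hq t with ⟨y, hy⟩ | h1 | h1
      · obtain ⟨m, hm, h2⟩ := ih (t + 1) (post ++ [y]) (by simp [hy, h]) hd'
        exact ⟨m, by omega, h2⟩
      · exact ⟨t, le_refl t, by simp [h], h1⟩
      · obtain ⟨m, hm, h2⟩ := ih (t + 1) post (by simp [h1, h]) hd'
        exact ⟨m, by omega, h2⟩
  | cons a pre ihp =>
    intro t post h
    obtain ⟨m, hm, hd⟩ := hinf t
    obtain ⟨d, rfl⟩ := Nat.exists_eq_add_of_le hm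
    clear hm
    induction d generalizing t post with
    | zero =>
      obtain ⟨m, hm, h2⟩ := ihp (t + 1) post (by
        have h3 : q (t + 1) = (q t).tail := hd.2
        simp [h3, h])
      exact ⟨m, by omega, h2⟩
    | succ d ih =>
      have hd' : DequeueAt q (t + 1 + d) := by
        rwa [show t + 1 + d = t + (d + 1) by omega]
      rcases hq t with ⟨y, hy⟩ | h1 | h1
      · obtain ⟨m, hm, h2⟩ := ih (t + 1) (post ++ [y]) (by simp [hy, h]) hd'
        exact ⟨m, by omega, h2⟩
      · obtain ⟨m, hm, h2⟩ := ihp (t + 1) post (by simp [h1.2, h])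
        exact ⟨m, by omega, h2⟩
      · obtain ⟨m, hm, h2⟩ := ih (t + 1) post (by simp [h1, h]) hd'
        exact ⟨m, by omega, h2⟩

/-- Starvation freedom: in a trace from the empty queue with pairwise distinct
enqueued elements in which dequeue steps occur infinitely often, every enqueued
element is eventually dequeued. -/
theorem queue_starvation_free {α : Type*} (q : ℕ → List α)
    (hq : IsQueueTrace q) (h0 : q 0 = [])
    (hinf : ∀ n, ∃ m, n ≤ m ∧ DequeueAt q m)
    (hdist : ∀ n₁ n₂ x y, EnqueueAt q n₁ x → EnqueueAt q n₂ y → n₁ ≠ n₂ → x ≠ y)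
    (x : α) (n : ℕ) (hx : EnqueueAt q n x) :
    ∃ m, n < m ∧ q m ≠ [] ∧ (q m).head? = some x ∧ DequeueAt q m := by
  obtain ⟨m, hm, h1, h2⟩ := queue_aux q hq hinf x (q n) (n + 1) [] hx
  exact ⟨m, hm, h2.1, h1, h2⟩
end
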